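/- Assume the normed space (F,‖·‖) satisfies Gaussian property (α+) with constant K ≥ 1. Then for every (P,P') ∈ P([d]) one has ‖A‖_{P'|P} ≤ K^{|⋃P'| − |P'|} · |||A|||_P, where |⋃P'| is the cardinality of the union of the sets in P' and |P'| is the number of sets in P', and |||A|||_P is taken with J = ⋃P (so that all coordinates in [d]∖⋃P = ⋃P' receive independent singleton Gaussians). -/

import Mathlib

/-!
Absorbing the deterministic factors into the array, it is enough to compare, for a fixed array `B`
and a family `Q` of disjoint nonempty blocks, the Gaussian chaos whose blocks are those of `Q`
with the fully decoupled chaos on the coordinates of `⋃ Q`. Splitting one block `J = J₁ ∪ J₂`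
into two costs one factor `K`: conditionally on the Gaussians of the other blocks, this is
property (α+) for the matrix indexed by the configurations on `J₁` and on `J₂`
(`chaosMean_split_le`). Peeling off one coordinate at a time, a block `J` needs `|J| - 1` such
splittings, which gives the exponent `∑ (|J| - 1) = |⋃ Q| - |Q|` (`chaosMean_le_singletons`).
Finally the supremum defining the right-hand norm is over a bounded set (`tNorm` is not a junk
value), since all deterministic factors are bounded by `1` in absolute value.
-/


open MeasureTheory ProbabilityTheory
open scoped Classical

noncomputable section

def stdGaussian (ι : Type*) [Fintype ι] : Measure (ι → ℝ) :=
  Measure.pi fun _ => gaussianReal 0 1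

abbrev GIdx (d n : ℕ) := Σ J : Finset (Fin d), ({l // l ∈ J} → Fin n)

def IsPartition {d : ℕ} (J : Finset (Fin d)) (P : Finset (Finset (Fin d))) : Prop :=
  (∀ I ∈ P, I.Nonempty) ∧ (∀ I ∈ P, ∀ I' ∈ P, I ≠ I' → Disjoint I I') ∧ P.sup id = J

def IsPartitionPair {d : ℕ} (S : Finset (Fin d)) (P P' : Finset (Finset (Fin d))) : Prop :=
  Disjoint P P' ∧ IsPartition S (P ∪ P')

def partitionsOf {d : ℕ} (J : Finset (Fin d)) : Finset (Finset (Finset (Fin d))) :=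
  Finset.univ.filter fun P => IsPartition J P

def partitionPairs (d : ℕ) :
    Finset (Finset (Finset (Fin d)) × Finset (Finset (Fin d))) :=
  Finset.univ.filter fun PP => IsPartitionPair Finset.univ PP.1 PP.2

def chaosNorm {F : Type*} [NormedAddCommGroup F] [NormedSpace ℝ F] {d n : ℕ}
    (A : (Fin d → Fin n) → F) (P' P : Finset (Finset (Fin d))) : ℝ :=
  sSup { r : ℝ | ∃ x : (I : Finset (Fin d)) → ({l // l ∈ I} → Fin n) → ℝ,
    (∀ I ∈ P, ∑ v : {l // l ∈ I} → Fin n, x I v ^ 2 ≤ 1) ∧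
    r = ∫ ω : GIdx d n → ℝ,
        ‖∑ i : Fin d → Fin n,
          ((∏ I ∈ P, x I fun l => i l.1) * ∏ J ∈ P', ω ⟨J, fun l => i l.1⟩) • A i‖
          ∂ stdGaussian (GIdx d n) }

def tNorm {F : Type*} [NormedAddCommGroup F] [NormedSpace ℝ F] {d n : ℕ}
    (A : (Fin d → Fin n) → F) (J : Finset (Fin d)) (P : Finset (Finset (Fin d))) : ℝ :=
  chaosNorm A ((Finset.univ \ J).image fun l => ({l} : Finset (Fin d))) P

def decChaos {F : Type*} [NormedAddCommGroup F] [NormedSpace ℝ F] {d n : ℕ}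
    (A : (Fin d → Fin n) → F) (ω : Fin d × Fin n → ℝ) : F :=
  ∑ i : Fin d → Fin n, (∏ k, ω (k, i k)) • A i

def momP {F : Type*} [NormedAddCommGroup F] [NormedSpace ℝ F] {d n : ℕ}
    (A : (Fin d → Fin n) → F) (p : ℝ) : ℝ :=
  (∫ ω : Fin d × Fin n → ℝ, ‖decChaos A ω‖ ^ p ∂ stdGaussian (Fin d × Fin n)) ^ (1 / p)

end

def GaussAlphaPlus (F : Type*) [NormedAddCommGroup F] [NormedSpace ℝ F] (K : ℝ) : Prop :=
  ∀ (n : ℕ) (b : Fin n → Fin n → F),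
    (∫ ω : Fin n × Fin n → ℝ, ‖∑ i, ∑ j, ω (i, j) • b i j‖
        ∂ stdGaussian (Fin n × Fin n)) ≤
      K * ∫ ω : (Fin n → ℝ) × (Fin n → ℝ), ‖∑ i, ∑ j, (ω.1 i * ω.2 j) • b i j‖
          ∂ (stdGaussian (Fin n)).prod (stdGaussian (Fin n))

/-! ### Standard Gaussian measures -/

instance stdGaussian_isProbabilityMeasure (ι : Type*) [Fintype ι] :
    IsProbabilityMeasure (stdGaussian ι) := by
  unfold _root_.stdGaussian; infer_instance

/-- Selecting distinct coordinates of a standard Gaussian vector gives a standard Gaussian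
vector. -/
lemma measurePreserving_stdGaussian_comp {ι κ : Type*} [Fintype ι] [Fintype κ] (f : κ → ι)
    (hf : Function.Injective f) :
    MeasurePreserving (fun (ω : ι → ℝ) k => ω (f k)) (stdGaussian ι) (stdGaussian κ) := by
  refine ⟨by fun_prop, ?_⟩
  have h1 : iIndepFun (fun i (ω : ι → ℝ) => ω i) (stdGaussian ι) := by
    unfold _root_.stdGaussian
    exact iIndepFun_pi (X := fun _ => id) (fun _ => aemeasurable_id)
  have h2 := h1.precomp hf
  rw [iIndepFun_iff_map_fun_eq_pi_map (fun k => (measurable_pi_apply (f k)).aemeasurable)] at h2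
  refine h2.trans ?_
  conv_rhs => unfold _root_.stdGaussian
  congr 1
  funext k
  exact (measurePreserving_eval (fun _ : ι => gaussianReal 0 1) (f k)).map_eq

lemma measurePreserving_stdGaussian_sum (α β : Type*) [Fintype α] [Fintype β] :
    MeasurePreserving (fun ω : α ⊕ β → ℝ => (fun a => ω (Sum.inl a), fun b => ω (Sum.inr b)))
      (stdGaussian (α ⊕ β)) ((stdGaussian α).prod (stdGaussian β)) :=
  measurePreserving_sumPiEquivProdPi (X := fun _ : α ⊕ β => ℝ) (fun _ => gaussianReal 0 1)

lemma measurePreserving_stdGaussian_split {ι α β : Type*} [Fintype ι] [Fintype α] [Fintype β]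
    (f : α ⊕ β → ι) (hf : Function.Injective f) :
    MeasurePreserving (fun ω : ι → ℝ => (fun a => ω (f (Sum.inl a)), fun b => ω (f (Sum.inr b))))
      (stdGaussian ι) ((stdGaussian α).prod (stdGaussian β)) :=
  (measurePreserving_stdGaussian_sum α β).comp (measurePreserving_stdGaussian_comp f hf)

lemma MeasureTheory.MeasurePreserving.integral_comp_of_continuous {X Y : Type*}
    [MeasurableSpace X] [MeasurableSpace Y] [TopologicalSpace Y] [OpensMeasurableSpace Y]
    {μ : Measure X} {ν : Measure Y} {φ : X → Y} (hφ : MeasurePreserving φ μ ν) {H : Y → ℝ}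
    (hH : Continuous H) : ∫ x, H (φ x) ∂μ = ∫ y, H y ∂ν := by
  rw [← hφ.map_eq, integral_map hφ.aemeasurable hH.measurable.aestronglyMeasurable]

/-- A product of distinct coordinates of a standard Gaussian vector is integrable. -/
lemma integrable_prod_stdGaussian {ι τ : Type*} [Fintype ι] (T : Finset τ) (f : τ → ι)
    (hf : Set.InjOn f T) :
    Integrable (fun ω : ι → ℝ => ∏ t ∈ T, ω (f t)) (stdGaussian ι) := by
  have h : Integrable (fun ω : ι → ℝ => ∏ i, (if i ∈ T.image f then ω i else 1))
      (stdGaussian ι) := by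
    unfold _root_.stdGaussian
    refine Integrable.fintype_prod (f := fun i (y : ℝ) => if i ∈ T.image f then y else 1)
      (fun i => ?_)
    by_cases hi : i ∈ T.image f
    · simp only [hi, if_true]
      exact (memLp_id_gaussianReal 1).integrable le_rfl
    · simp only [hi, if_false]
      exact integrable_const _
  refine h.congr (Filter.Eventually.of_forall fun ω => ?_)
  simp only [Finset.prod_ite_mem, Finset.univ_inter]
  rw [Finset.prod_image hf]

/-! ### Property (α+) with arbitrary finite index sets -/

/-- Property (α+) for a sum over `S` in which the term `s` carries the entry `(p s, q s)` of the
Gaussian matrix; the index sets `ι` and `κ` need not be of equal size. -/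
lemma GaussAlphaPlus.general {E : Type*} [NormedAddCommGroup E] [NormedSpace ℝ E] {K : ℝ}
    (hE : GaussAlphaPlus E K) {S ι κ : Type*} [Fintype S] [Fintype ι] [Fintype κ]
    (p : S → ι) (q : S → κ) (c : S → E) :
    ∫ ω : ι × κ → ℝ, ‖∑ s, ω (p s, q s) • c s‖ ∂stdGaussian (ι × κ) ≤
      K * ∫ ω : (ι → ℝ) × (κ → ℝ), ‖∑ s, (ω.1 (p s) * ω.2 (q s)) • c s‖
        ∂(stdGaussian ι).prod (stdGaussian κ) := by
  -- Both index sets are embedded in `Fin N`; unused matrix entries are zero.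
  let N := Fintype.card ι + Fintype.card κ
  let e₁ : ι → Fin N := fun a => Fin.castAdd _ (Fintype.equivFin ι a)
  let e₂ : κ → Fin N := fun a => Fin.natAdd _ (Fintype.equivFin κ a)
  have he₁ : Function.Injective e₁ :=
    (Fin.castAdd_injective _ _).comp (Fintype.equivFin ι).injective
  have he₂ : Function.Injective e₂ :=
    (Fin.natAdd_injective _ _).comp (Fintype.equivFin κ).injective
  let b : Fin N → Fin N → E := fun i j =>
    ∑ s, if e₁ (p s) = i then (if e₂ (q s) = j then c s else 0) else 0
  have key : ∀ w : Fin N → Fin N → ℝ,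
      ∑ i, ∑ j, w i j • b i j = ∑ s, w (e₁ (p s)) (e₂ (q s)) • c s := by
    intro w
    simp only [b, Finset.smul_sum, smul_ite, smul_zero]
    have : ∀ i, ∑ j, ∑ s, (if e₁ (p s) = i then (if e₂ (q s) = j then w i j • c s else 0) else 0)
        = ∑ s, if e₁ (p s) = i then w i (e₂ (q s)) • c s else 0 := by
      intro i
      rw [Finset.sum_comm]
      refine Finset.sum_congr rfl fun s _ => ?_
      split_ifs <;> simp
    simp only [this]
    rw [Finset.sum_comm]
    simp
  have h := hE N b
  have hl := fun ω : Fin N × Fin N → ℝ => key (fun i j => ω (i, j))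
  have hr := fun ω : (Fin N → ℝ) × (Fin N → ℝ) => key (fun i j => ω.1 i * ω.2 j)
  simp only [hl, hr] at h
  have m₁ := measurePreserving_stdGaussian_comp (Prod.map e₁ e₂) (he₁.prodMap he₂)
  have m₂ := (measurePreserving_stdGaussian_comp e₁ he₁).prod
    (measurePreserving_stdGaussian_comp e₂ he₂)
  have i₁ := m₁.integral_comp_of_continuous
    (H := fun ω : ι × κ → ℝ => ‖∑ s, ω (p s, q s) • c s‖) (by fun_prop)
  have i₂ := m₂.integral_comp_of_continuous
    (H := fun ω : (ι → ℝ) × (κ → ℝ) => ‖∑ s, (ω.1 (p s) * ω.2 (q s)) • c s‖) (by fun_prop)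
  rw [← i₁, ← i₂]
  exact h

/-! ### Splitting the blocks of a chaos -/

section Chaos

variable {E : Type*} [NormedAddCommGroup E] [NormedSpace ℝ E] {d n : ℕ}

/-- The mean norm of the Gaussian chaos of the array `B` in which every block `J ∈ Q` of
coordinates carries its own independent Gaussian array. -/
noncomputable def chaosMean (B : (Fin d → Fin n) → E) (Q : Finset (Finset (Fin d))) : ℝ :=
  ∫ ω : GIdx d n → ℝ, ‖∑ i : Fin d → Fin n, (∏ J ∈ Q, ω ⟨J, fun l => i l.1⟩) • B i‖
    ∂stdGaussian (GIdx d n)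

lemma integrable_blocks (Q : Finset (Finset (Fin d))) (i : Fin d → Fin n) :
    Integrable (fun ω : GIdx d n → ℝ => ∏ J ∈ Q, ω ⟨J, fun l => i l.1⟩)
      (stdGaussian (GIdx d n)) :=
  integrable_prod_stdGaussian Q (fun J => (⟨J, fun l => i l.1⟩ : GIdx d n))
    (fun _ _ _ _ h => congrArg Sigma.fst h)

lemma integrable_chaos (B : (Fin d → Fin n) → E) (Q : Finset (Finset (Fin d))) :
    Integrable (fun ω : GIdx d n → ℝ =>
      ‖∑ i : Fin d → Fin n, (∏ J ∈ Q, ω ⟨J, fun l => i l.1⟩) • B i‖)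
      (stdGaussian (GIdx d n)) :=
  (integrable_finsetSum _ fun i _ => (integrable_blocks Q i).smul_const (B i)).norm

/-- Splitting one block into two costs at most a factor `K`. -/
lemma chaosMean_split_le {K : ℝ} (hE : GaussAlphaPlus E K) (B : (Fin d → Fin n) → E)
    (Q : Finset (Finset (Fin d))) (J J₁ J₂ : Finset (Fin d)) (hJ : J ∉ Q) (hJ₁ : J₁ ∉ Q)
    (hJ₂ : J₂ ∉ Q) (hne : J₁ ≠ J₂) (hU : J = J₁ ∪ J₂) :
    chaosMean B (insert J Q) ≤ K * chaosMean B (insert J₁ (insert J₂ Q)) := by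
  -- `κ₀` indexes the Gaussians of the untouched blocks.
  let κ₀ := {p : GIdx d n // p.1 ∈ Q}
  let c₀ : (κ₀ → ℝ) → (Fin d → Fin n) → ℝ := fun u i =>
    ∏ I ∈ Q.attach, u ⟨⟨I.1, fun l => i l.1⟩, I.2⟩
  have hc₀ : ∀ (ω : GIdx d n → ℝ) i,
      c₀ (fun p => ω p.1) i = ∏ I ∈ Q, ω ⟨I, fun l => i l.1⟩ := fun ω i =>
    Finset.prod_attach Q (fun I => ω ⟨I, fun l => i l.1⟩)
  have hc₀c : ∀ i, Continuous fun u => c₀ u i := fun i => by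
    simp only [c₀]; fun_prop
  let β (I : Finset (Fin d)) := {l // l ∈ I} → Fin n
  have hs₁ : J₁ ⊆ J := hU ▸ Finset.subset_union_left
  have hs₂ : J₂ ⊆ J := hU ▸ Finset.subset_union_right
  let ρ : β J → β J₁ × β J₂ := fun v => (fun l => v ⟨l.1, hs₁ l.2⟩, fun l => v ⟨l.1, hs₂ l.2⟩)
  have hρ : Function.Injective ρ := by
    intro v w h
    funext ⟨l, hl⟩
    rcases Finset.mem_union.1 (hU ▸ hl) with h' | h'
    · exact congrFun (congrArg Prod.fst h) ⟨l, h'⟩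
    · exact congrFun (congrArg Prod.snd h) ⟨l, h'⟩
  let f : κ₀ ⊕ β J → GIdx d n := Sum.elim (fun p => p.1) (fun v => ⟨J, v⟩)
  have hf : Function.Injective f := by
    refine Function.Injective.sumElim Subtype.val_injective sigma_mk_injective ?_
    rintro ⟨p, hp⟩ v h
    exact hJ ((show p.1 = J from congrArg Sigma.fst h) ▸ hp)
  let g : κ₀ ⊕ (β J₁ ⊕ β J₂) → GIdx d n :=
    Sum.elim (fun p => p.1) (Sum.elim (fun v => ⟨J₁, v⟩) (fun v => ⟨J₂, v⟩))
  have hg : Function.Injective g := by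
    refine Function.Injective.sumElim Subtype.val_injective
      (Function.Injective.sumElim sigma_mk_injective sigma_mk_injective ?_) ?_
    · intro v w h
      exact hne (congrArg Sigma.fst h)
    · rintro ⟨p, hp⟩ (v | v) h
      · exact hJ₁ ((show p.1 = J₁ from congrArg Sigma.fst h) ▸ hp)
      · exact hJ₂ ((show p.1 = J₂ from congrArg Sigma.fst h) ▸ hp)
  have mf := measurePreserving_stdGaussian_split f hf
  have mg := ((MeasurePreserving.id (stdGaussian κ₀)).prod
    (measurePreserving_stdGaussian_sum (β J₁) (β J₂))).comp
    (measurePreserving_stdGaussian_split g hg)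
  let HL : (κ₀ → ℝ) × (β J → ℝ) → ℝ := fun z =>
    ‖∑ i : Fin d → Fin n, z.2 (fun l => i l.1) • (c₀ z.1 i • B i)‖
  let HR : (κ₀ → ℝ) × ((β J₁ → ℝ) × (β J₂ → ℝ)) → ℝ := fun z =>
    ‖∑ i : Fin d → Fin n, (z.2.1 (fun l => i l.1) * z.2.2 (fun l => i l.1)) • (c₀ z.1 i • B i)‖
  have hHL : Continuous HL := by
    simp only [HL, c₀]; fun_prop
  have hHR : Continuous HR := by
    simp only [HR, c₀]; fun_prop
  have eL : (fun ω : GIdx d n → ℝ => ‖∑ i : Fin d → Fin n,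
      (∏ I ∈ insert J Q, ω ⟨I, fun l => i l.1⟩) • B i‖) =
      HL ∘ (fun ω : GIdx d n → ℝ =>
        (fun a => ω (f (Sum.inl a)), fun b => ω (f (Sum.inr b)))) := by
    funext ω
    simp only [HL, Function.comp, f, Sum.elim_inl, Sum.elim_inr, hc₀, smul_smul,
      Finset.prod_insert hJ]
  have hJ₁' : J₁ ∉ insert J₂ Q := by simp [hne, hJ₁]
  have eR : (fun ω : GIdx d n → ℝ => ‖∑ i : Fin d → Fin n,
      (∏ I ∈ insert J₁ (insert J₂ Q), ω ⟨I, fun l => i l.1⟩) • B i‖) =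
      HR ∘ (Prod.map id (fun ω : β J₁ ⊕ β J₂ → ℝ =>
          (fun a => ω (Sum.inl a), fun b => ω (Sum.inr b))) ∘ (fun ω : GIdx d n → ℝ =>
        (fun a => ω (g (Sum.inl a)), fun b => ω (g (Sum.inr b))))) := by
    funext ω
    simp only [HR, Function.comp, g, Sum.elim_inl, Sum.elim_inr, hc₀, smul_smul, Prod.map, id,
      Finset.prod_insert hJ₁', Finset.prod_insert hJ₂, mul_assoc]
  have iL : Integrable HL ((stdGaussian κ₀).prod (stdGaussian (β J))) := by
    rw [← mf.integrable_comp hHL.measurable.aestronglyMeasurable, ← eL]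
    exact integrable_chaos B _
  have iR : Integrable HR
      ((stdGaussian κ₀).prod ((stdGaussian (β J₁)).prod (stdGaussian (β J₂)))) := by
    rw [← mg.integrable_comp hHR.measurable.aestronglyMeasurable, ← eR]
    exact integrable_chaos B _
  have vL : chaosMean B (insert J Q) = ∫ z, HL z ∂((stdGaussian κ₀).prod (stdGaussian (β J))) := by
    rw [← mf.integral_comp_of_continuous hHL]
    exact congrArg (fun h => ∫ ω, h ω ∂stdGaussian (GIdx d n)) eL
  have vR : chaosMean B (insert J₁ (insert J₂ Q)) =
      ∫ z, HR z ∂((stdGaussian κ₀).prod ((stdGaussian (β J₁)).prod (stdGaussian (β J₂)))) := by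
    rw [← mg.integral_comp_of_continuous hHR]
    exact congrArg (fun h => ∫ ω, h ω ∂stdGaussian (GIdx d n)) eR
  rw [vL, vR, integral_prod _ iL, integral_prod _ iR, ← integral_const_mul]
  refine integral_mono iL.integral_prod_left (iR.integral_prod_left.const_mul K) fun u => ?_
  -- Conditionally on the other blocks, this is (α+) after viewing `ω` on `J` as a matrix via `ρ`.
  have h := hE.general (S := Fin d → Fin n) (ι := β J₁) (κ := β J₂)
    (fun i l => i l.1) (fun i l => i l.1) (fun i => c₀ u i • B i)
  refine le_of_eq_of_le ?_ h
  exact ((measurePreserving_stdGaussian_comp ρ hρ).integral_comp_of_continuous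
    (H := fun y => HL (u, y)) (by fun_prop)).symm

/-- Splitting all blocks into singletons; `Q.sup id` is the union of the blocks. -/
lemma chaosMean_le_singletons {K : ℝ} (hK : 1 ≤ K) (hE : GaussAlphaPlus E K)
    (B : (Fin d → Fin n) → E) (m : ℕ) : ∀ Q : Finset (Finset (Fin d)),
    (∀ I ∈ Q, I.Nonempty) → (∀ I ∈ Q, ∀ I' ∈ Q, I ≠ I' → Disjoint I I') →
    ∑ J ∈ Q, (J.card - 1) = m →
    chaosMean B Q ≤ K ^ m * chaosMean B ((Q.sup id).image fun l => ({l} : Finset (Fin d))) := by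
  induction m with
  | zero =>
    intro Q hne _ hm
    have h1 : ∀ J ∈ Q, ∃ l, J = {l} := by
      intro J hJ
      have h := Finset.sum_eq_zero_iff.1 hm J hJ
      have := (hne J hJ).card_pos
      exact Finset.card_eq_one.1 (by omega)
    have : (Q.sup id).image (fun l => ({l} : Finset (Fin d))) = Q := by
      ext J
      simp only [Finset.mem_image, Finset.mem_sup, id]
      constructor
      · rintro ⟨l, ⟨I, hI, hl⟩, rfl⟩
        obtain ⟨k, rfl⟩ := h1 I hI
        rw [Finset.mem_singleton] at hl
        exact hl ▸ hI
      · intro hJ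
        obtain ⟨l, rfl⟩ := h1 J hJ
        exact ⟨l, ⟨{l}, hJ, Finset.mem_singleton_self l⟩, rfl⟩
    rw [this]; simp
  | succ m ih =>
    intro Q hne hdis hm
    obtain ⟨J, hJ, hJc⟩ : ∃ J ∈ Q, J.card - 1 ≠ 0 := by
      by_contra! h
      rw [Finset.sum_eq_zero h] at hm
      omega
    obtain ⟨l, hl⟩ := hne J hJ
    obtain ⟨Q₀, hJQ, rfl⟩ : ∃ Q₀, J ∉ Q₀ ∧ insert J Q₀ = Q :=
      ⟨Q.erase J, Finset.notMem_erase _ _, Finset.insert_erase hJ⟩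
    have hcard : (J.erase l).card = J.card - 1 := Finset.card_erase_of_mem hl
    have hn₂ : (J.erase l).Nonempty := Finset.card_pos.1 (by omega)
    have hsub : ∀ I : Finset (Fin d), I ⊆ J → I.Nonempty →
        ∀ I' ∈ Q₀, Disjoint I I' := fun I hIJ _ I' hI' =>
      (hdis J hJ I' (Finset.mem_insert_of_mem hI') (fun h => hJQ (h ▸ hI'))).mono_left hIJ
    have hnot : ∀ I : Finset (Fin d), I ⊆ J → I.Nonempty → I ∉ Q₀ := fun I hIJ hI hIQ =>
      hI.ne_empty (Finset.disjoint_self_iff_empty _ |>.1 (hsub I hIJ hI I hIQ))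
    have hs₁ : ({l} : Finset (Fin d)) ⊆ J := by simpa using hl
    have hs₂ : J.erase l ⊆ J := Finset.erase_subset _ _
    have hn₁ : ({l} : Finset (Fin d)).Nonempty := Finset.singleton_nonempty l
    have hd₁₂ : Disjoint ({l} : Finset (Fin d)) (J.erase l) := by simp
    have hne₁₂ : ({l} : Finset (Fin d)) ≠ J.erase l := fun h => by
      rw [← h] at hd₁₂; simp at hd₁₂
    have hU : J = {l} ∪ J.erase l := by
      rw [← Finset.insert_eq, Finset.insert_erase hl]
    have hJ₁' : ({l} : Finset (Fin d)) ∉ insert (J.erase l) Q₀ := by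
      rw [Finset.mem_insert, not_or]
      exact ⟨hne₁₂, hnot _ hs₁ hn₁⟩
    have step := chaosMean_split_le hE B Q₀ J {l} (J.erase l) hJQ (hnot _ hs₁ hn₁)
      (hnot _ hs₂ hn₂) hne₁₂ hU
    have hsup : (insert {l} (insert (J.erase l) Q₀)).sup id = (insert J Q₀).sup id := by
      simp only [Finset.sup_insert, id, Finset.sup_eq_union]
      rw [← Finset.union_assoc, ← hU]
    have ih' := ih (insert {l} (insert (J.erase l) Q₀)) ?_ ?_ ?_
    · rw [hsup] at ih'
      calc chaosMean B (insert J Q₀) ≤ K * chaosMean B _ := step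
        _ ≤ K * (K ^ m * _) := mul_le_mul_of_nonneg_left ih' (by linarith)
        _ = _ := by rw [pow_succ]; ring
    · intro I hI
      simp only [Finset.mem_insert] at hI
      rcases hI with rfl | rfl | hI
      · exact hn₁
      · exact hn₂
      · exact hne I (Finset.mem_insert_of_mem hI)
    · intro I hI I' hI' hII
      simp only [Finset.mem_insert] at hI hI'
      rcases hI with rfl | rfl | hI <;> rcases hI' with rfl | rfl | hI'
      · exact absurd rfl hII
      · exact hd₁₂
      · exact hsub _ hs₁ hn₁ I' hI'
      · exact hd₁₂.symm
      · exact absurd rfl hII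
      · exact hsub _ hs₂ hn₂ I' hI'
      · exact (hsub _ hs₁ hn₁ I hI).symm
      · exact (hsub _ hs₂ hn₂ I hI).symm
      · exact hdis I (Finset.mem_insert_of_mem hI) I' (Finset.mem_insert_of_mem hI') hII
    · rw [Finset.sum_insert hJQ] at hm
      rw [Finset.sum_insert hJ₁', Finset.sum_insert (hnot _ hs₂ hn₂), Finset.card_singleton]
      omega

lemma chaos_integral_eq (A : (Fin d → Fin n) → E) (P P' : Finset (Finset (Fin d)))
    (x : (I : Finset (Fin d)) → ({l // l ∈ I} → Fin n) → ℝ) :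
    (∫ ω : GIdx d n → ℝ, ‖∑ i : Fin d → Fin n,
      ((∏ I ∈ P, x I fun l => i l.1) * ∏ J ∈ P', ω ⟨J, fun l => i l.1⟩) • A i‖
        ∂stdGaussian (GIdx d n)) =
      chaosMean (fun i => (∏ I ∈ P, x I fun l => i l.1) • A i) P' := by
  unfold chaosMean
  simp only [smul_smul, mul_comm]

/-- The expectations over which the supremum in `chaosNorm` is taken are uniformly bounded. -/
lemma chaosMean_bound (A : (Fin d → Fin n) → E) (P P' : Finset (Finset (Fin d)))
    (x : (I : Finset (Fin d)) → ({l // l ∈ I} → Fin n) → ℝ)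
    (hx : ∀ I ∈ P, ∑ v : {l // l ∈ I} → Fin n, x I v ^ 2 ≤ 1) :
    chaosMean (fun i => (∏ I ∈ P, x I fun l => i l.1) • A i) P' ≤
      ∫ ω : GIdx d n → ℝ, ∑ i : Fin d → Fin n, |∏ J ∈ P', ω ⟨J, fun l => i l.1⟩| * ‖A i‖
        ∂stdGaussian (GIdx d n) := by
  refine integral_mono (integrable_chaos _ _)
    (integrable_finsetSum _ fun i _ => (integrable_blocks P' i).abs.mul_const _) fun ω => ?_
  refine (norm_sum_le _ _).trans (Finset.sum_le_sum fun i _ => ?_)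
  rw [norm_smul, norm_smul, Real.norm_eq_abs, Real.norm_eq_abs]
  refine mul_le_mul_of_nonneg_left ?_ (abs_nonneg _)
  refine mul_le_of_le_one_left (norm_nonneg _) ?_
  rw [Finset.abs_prod]
  refine Finset.prod_le_one (fun _ _ => abs_nonneg _) fun I hI => ?_
  rw [← sq_le_one_iff_abs_le_one]
  exact (Finset.single_le_sum (f := fun v => x I v ^ 2) (fun v _ => sq_nonneg _)
    (Finset.mem_univ (fun l => i l.1))).trans (hx I hI)

end Chaos

theorem chaosNorm_le_tNorm_of_alphaPlus (d : ℕ) (hd : 1 ≤ d)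
    (E : Type*) [NormedAddCommGroup E] [NormedSpace ℝ E] (K : ℝ) (hK : 1 ≤ K)
    (hE : GaussAlphaPlus E K) (n : ℕ) (A : (Fin d → Fin n) → E)
    (P P' : Finset (Finset (Fin d)))
    (hPP : IsPartitionPair Finset.univ P P') :
    chaosNorm A P' P ≤ K ^ ((P'.sup id).card - P'.card) * tNorm A (P.sup id) P := by
  obtain ⟨hPd, hne, hdis, hsup⟩ := hPP
  have hne' : ∀ I ∈ P', I.Nonempty := fun I hI => hne I (Finset.mem_union_right _ hI)
  have hdis' : ∀ I ∈ P', ∀ I' ∈ P', I ≠ I' → Disjoint I I' := fun I hI I' hI' =>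
    hdis I (Finset.mem_union_right _ hI) I' (Finset.mem_union_right _ hI')
  have hcompl : Finset.univ \ P.sup id = P'.sup id := by
    have hD : Disjoint (P.sup id) (P'.sup id) := by
      rw [Finset.disjoint_sup_left]
      intro I hI
      rw [Finset.disjoint_sup_right]
      intro I' hI'
      refine hdis I (Finset.mem_union_left _ hI) I' (Finset.mem_union_right _ hI') ?_
      rintro rfl
      exact Finset.disjoint_left.1 hPd hI hI'
    rw [Finset.sup_union] at hsup
    rw [← hsup, Finset.sup_eq_union, Finset.union_sdiff_left, Finset.sdiff_eq_self_iff_disjoint]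
    exact hD.symm
  have hexp : ∑ J ∈ P', (J.card - 1) = (P'.sup id).card - P'.card := by
    rw [Finset.sum_tsub_distrib _ (fun J hJ => (hne' J hJ).card_pos), Finset.sup_eq_biUnion,
      Finset.card_biUnion (t := id) hdis']
    simp
  have hK0 : (0 : ℝ) ≤ K ^ ((P'.sup id).card - P'.card) := pow_nonneg (by linarith) _
  unfold tNorm
  rw [hcompl]
  refine csSup_le ⟨_, fun _ _ => 0, by simp, rfl⟩ ?_
  rintro r ⟨x, hx, rfl⟩
  rw [chaos_integral_eq]
  refine (chaosMean_le_singletons hK hE _ _ P' hne' hdis' hexp).trans ?_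
  refine mul_le_mul_of_nonneg_left ?_ hK0
  unfold chaosNorm
  refine le_csSup ?_ ⟨x, hx, (chaos_integral_eq A P _ x).symm⟩
  refine ⟨∫ ω : GIdx d n → ℝ, ∑ i : Fin d → Fin n,
    |∏ J ∈ (P'.sup id).image (fun l => ({l} : Finset (Fin d))), ω ⟨J, fun l => i l.1⟩| * ‖A i‖
      ∂_root_.stdGaussian (GIdx d n), fun r hr => ?_⟩
  obtain ⟨y, hy, rfl⟩ := hr
  rw [chaos_integral_eq]
  exact chaosMean_bound A P _ y hy
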